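/- arXiv:2301.08777 — 3 statements merged into one kernel-verified Lean document; each statement's English description precedes it below -/
import Mathlib

section
/- Let G be a tournament of order at least 3. Then: (1) for every t ≥ 1, ILTT^t(G) is Hamiltonian if and only if G is strong; and (2) if G has no sink, then for every t ≥ 1, ILTT_d^t(G) is Hamiltonian. -/
open scoped Classical

noncomputable section

/-- A tournament: a finite directed graph where every pair of distinct nodes
is joined by exactly one arc. -/
structure Tournament where
  V : Type
  [fintypeV : Fintype V]
  [decEqV : DecidableEq V]
  arc : V → V → Prop
  irrefl : ∀ x, ¬ arc x x
  exactlyOne : ∀ x y, x ≠ y → (arc x y ↔ ¬ arc y x)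

attribute [instance] Tournament.fintypeV Tournament.decEqV

namespace Tournament

/-- The ILTT extension: vertices are `V ⊕ V` where `Sum.inl x` is the original
node `x` and `Sum.inr x` is its clone `x'`. -/
def ILTT (T : Tournament) : Tournament where
  V := T.V ⊕ T.V
  arc := fun u v =>
    match u, v with
    | Sum.inl x, Sum.inl y => T.arc x y
    | Sum.inl x, Sum.inr y => T.arc x y
    | Sum.inr x, Sum.inl y => T.arc x y ∨ x = y
    | Sum.inr x, Sum.inr y => T.arc x y
  irrefl := by rintro (x | x) h <;> exact T.irrefl x h
  exactlyOne := by
    rintro (x | x) (y | y) hxy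
    · exact T.exactlyOne x y (fun h => hxy (by rw [h]))
    · by_cases h : x = y
      · subst h; simp [T.irrefl x]
      · have := T.exactlyOne x y h
        simp only [not_or]
        constructor
        · intro ha; exact ⟨this.mp ha, fun h' => h h'.symm⟩
        · intro ha; exact this.mpr ha.1
    · by_cases h : x = y
      · subst h; simp [T.irrefl x]
      · have := T.exactlyOne x y h
        constructor
        · rintro (ha | ha)
          · exact this.mp ha
          · exact absurd ha h
        · intro ha; exact Or.inl (this.mpr ha)
    · exact T.exactlyOne x y (fun h => hxy (by rw [h]))

/-- The dual ILTT extension: identical to `ILTT` except the arcs between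
clones are reversed. -/
def ILTTd (T : Tournament) : Tournament where
  V := T.V ⊕ T.V
  arc := fun u v =>
    match u, v with
    | Sum.inl x, Sum.inl y => T.arc x y
    | Sum.inl x, Sum.inr y => T.arc x y
    | Sum.inr x, Sum.inl y => T.arc x y ∨ x = y
    | Sum.inr x, Sum.inr y => T.arc y x
  irrefl := by rintro (x | x) h <;> exact T.irrefl x h
  exactlyOne := by
    rintro (x | x) (y | y) hxy
    · exact T.exactlyOne x y (fun h => hxy (by rw [h]))
    · by_cases h : x = y
      · subst h; simp [T.irrefl x]
      · have := T.exactlyOne x y h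
        simp only [not_or]
        constructor
        · intro ha; exact ⟨this.mp ha, fun h' => h h'.symm⟩
        · intro ha; exact this.mpr ha.1
    · by_cases h : x = y
      · subst h; simp [T.irrefl x]
      · have := T.exactlyOne x y h
        constructor
        · rintro (ha | ha)
          · exact this.mp ha
          · exact absurd ha h
        · intro ha; exact Or.inl (this.mpr ha)
    · exact T.exactlyOne y x (fun h => hxy (by rw [h]))

/-- A tournament is strong if, for every ordered pair of nodes, there is a
directed path from the first to the second. -/
def Strong (T : Tournament) : Prop := ∀ u v : T.V, Relation.ReflTransGen T.arc u v

/-- `HasWalk T u v n` : there is a directed walk of length `n` from `u` to `v`. -/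
def HasWalk (T : Tournament) (u v : T.V) (n : ℕ) : Prop :=
  ∃ f : Fin (n + 1) → T.V, f 0 = u ∧ f (Fin.last n) = v ∧
    ∀ i : Fin n, T.arc (f i.castSucc) (f i.succ)

/-- The distance from `u` to `v`: the length of a shortest directed path. -/
def dist (T : Tournament) (u v : T.V) : ℕ := sInf {n | HasWalk T u v n}

/-- The diameter: the maximum distance over ordered pairs of distinct nodes. -/
def diam (T : Tournament) : ℕ :=
  (Finset.univ.filter (fun p : T.V × T.V => p.1 ≠ p.2)).sup
    (fun p => T.dist p.1 p.2)

/-- The Wiener index: the sum of distances over ordered pairs of distinct nodes. -/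
def wiener (T : Tournament) : ℕ :=
  ∑ p ∈ Finset.univ.filter (fun p : T.V × T.V => p.1 ≠ p.2), T.dist p.1 p.2

/-- The average distance `L(T) = W(T)/(m(m-1))` where `m` is the order. -/
def avgDist (T : Tournament) : ℝ :=
  (T.wiener : ℝ) / ((Fintype.card T.V : ℝ) * ((Fintype.card T.V : ℝ) - 1))

/-- `J` is a subtournament of `K`. -/
def IsSubtournament (J K : Tournament) : Prop :=
  ∃ f : J.V → K.V, Function.Injective f ∧ ∀ u v : J.V, J.arc u v ↔ K.arc (f u) (f v)

/-- The linear order on `t` nodes. -/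
def linearTournament (t : ℕ) : Tournament where
  V := Fin t
  arc := fun i j => i < j
  irrefl := fun i => lt_irrefl i
  exactlyOne := fun i j h => by
    rw [not_lt]
    exact ⟨le_of_lt, fun hle => hle.lt_of_ne h⟩

/-- A tournament is Hamiltonian if it has a directed cycle through all nodes. -/
def IsHamiltonian (T : Tournament) : Prop :=
  ∃ f : ZMod (Fintype.card T.V) ≃ T.V, ∀ i, T.arc (f i) (f (i + 1))

/-- `S` is an in-dominating set. -/
def InDom (T : Tournament) (S : Finset T.V) : Prop :=
  ∀ u, u ∉ S → ∃ v ∈ S, T.arc u v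

/-- `S` is an out-dominating set. -/
def OutDom (T : Tournament) (S : Finset T.V) : Prop :=
  ∀ u, u ∉ S → ∃ v ∈ S, T.arc v u

/-- The in-domination number. -/
def inDomNum (T : Tournament) : ℕ := sInf {n | ∃ S : Finset T.V, T.InDom S ∧ S.card = n}

/-- The out-domination number. -/
def outDomNum (T : Tournament) : ℕ := sInf {n | ∃ S : Finset T.V, T.OutDom S ∧ S.card = n}

end Tournament

open Tournament

namespace Tournament

variable {T : Tournament}

lemma arc_of_not_arc {x y : T.V} (hne : x ≠ y) (h : ¬ T.arc x y) : T.arc y x :=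
  (T.exactlyOne y x hne.symm).mpr h

lemma not_arc_of_arc {x y : T.V} (h : T.arc x y) : ¬ T.arc y x :=
  (T.exactlyOne x y (fun e => T.irrefl y (e ▸ h))).mp h

/-- In a strong tournament, every nonempty proper set of nodes has an arc leaving it. -/
lemma Strong.exists_arc_leaving (hT : T.Strong) {S : T.V → Prop} {a b : T.V}
    (ha : S a) (hb : ¬ S b) : ∃ x y, S x ∧ ¬ S y ∧ T.arc x y := by
  by_contra! hcon
  refine hb ?_
  clear hb
  induction hT a b with
  | refl => exact ha
  | tail _ hxy ih =>
    by_contra hy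
    exact hcon _ _ ih hy hxy

lemma Strong.exists_arc_to (hT : T.Strong) (hc : 2 ≤ Fintype.card T.V) (x : T.V) :
    ∃ y, T.arc x y := by
  have : Nontrivial T.V := Fintype.one_lt_card_iff_nontrivial.mp hc
  obtain ⟨z, hz⟩ := exists_ne x
  obtain ⟨_, y, rfl, -, hy⟩ := hT.exists_arc_leaving (S := fun v => v = x) rfl hz
  exact ⟨y, hy⟩

lemma Strong.exists_arc_from (hT : T.Strong) (hc : 2 ≤ Fintype.card T.V) (x : T.V) :
    ∃ y, T.arc y x := by
  have : Nontrivial T.V := Fintype.one_lt_card_iff_nontrivial.mp hc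
  obtain ⟨z, hz⟩ := exists_ne x
  obtain ⟨y, w, -, hw, hy⟩ :=
    hT.exists_arc_leaving (S := fun v => v ≠ x) hz (not_not.mpr rfl)
  exact ⟨y, not_not.mp hw ▸ hy⟩

/-- The nodes `a :: l`, in this order, form a directed cycle without repetition. -/
def IsCyc (T : Tournament) (a : T.V) (l : List T.V) : Prop :=
  (a :: l).Nodup ∧ List.IsChain T.arc (a :: (l ++ [a]))

lemma IsCyc.exists_rotate {a b : T.V} {l : List T.V} (h : T.IsCyc a l) (hb : b ∈ a :: l) :
    ∃ m, T.IsCyc b m ∧ (b :: m).Perm (a :: l) := by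
  rcases List.mem_cons.mp hb with rfl | hb
  · exact ⟨l, h, List.Perm.refl _⟩
  obtain ⟨s, t, rfl⟩ := List.append_of_mem hb
  have hp : (b :: (t ++ a :: s)).Perm (a :: (s ++ b :: t)) :=
    (List.perm_append_comm (l₁ := b :: t) (l₂ := a :: s))
  refine ⟨t ++ a :: s, ⟨hp.nodup_iff.mpr h.1, ?_⟩, hp⟩
  have hc : List.IsChain T.arc ((a :: s) ++ b :: (t ++ [a])) := by simpa using h.2
  obtain ⟨h1, h2⟩ := List.isChain_split.mp hc
  have := List.isChain_split (R := T.arc) (l₁ := b :: t) (c := a) (l₂ := s ++ [b])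
  simpa using this.mpr ⟨by simpa using h2, by simpa using h1⟩

/-- A node that an arc enters from the start of a path and that has an arc to an inner node
of the path can be inserted into the path. -/
lemma exists_insert_of_isChain {v b : T.V} : ∀ {l : List T.V} {a : T.V},
    List.IsChain T.arc (a :: (l ++ [b])) → T.arc a v → v ∉ l → (∃ y ∈ l, T.arc v y) →
    ∃ m, m.Perm (v :: l) ∧ List.IsChain T.arc (a :: (m ++ [b]))
  | [], _, _, _, _, ⟨_, hy, _⟩ => absurd hy List.not_mem_nil
  | c :: l, a, h, hav, hv, ⟨y, hy, hvy⟩ => by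
    rw [List.cons_append, List.isChain_cons_cons] at h
    by_cases hvc : T.arc v c
    · exact ⟨v :: c :: l, List.Perm.refl _, by simp [hav, hvc, h.2]⟩
    · have hcv : T.arc c v := arc_of_not_arc (fun e => hv (e ▸ List.mem_cons_self)) hvc
      have hyl : y ∈ l := (List.mem_cons.mp hy).resolve_left (fun e => hvc (e ▸ hvy))
      obtain ⟨m, hm, hch⟩ := exists_insert_of_isChain h.2 hcv
        (fun hvl => hv (List.mem_cons_of_mem _ hvl)) ⟨y, hyl, hvy⟩
      exact ⟨c :: m, (hm.cons c).trans (List.Perm.swap v c l), by simp [h.1, hch]⟩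

/-- In a strong tournament, a cycle missing some node can be made longer. -/
lemma IsCyc.exists_longer (hT : T.Strong) {a : T.V} {l : List T.V} (h : T.IsCyc a l)
    {w : T.V} (hw : w ∉ a :: l) : ∃ b m, T.IsCyc b m ∧ l.length < m.length := by
  by_cases hmix : ∃ v, v ∉ a :: l ∧ (∃ x ∈ a :: l, T.arc x v) ∧ ∃ y ∈ a :: l, T.arc v y
  · obtain ⟨v, hv, ⟨x, hx, hxv⟩, y, hy, hvy⟩ := hmix
    obtain ⟨m, hm, hp⟩ := h.exists_rotate hx
    rw [← hp.mem_iff] at hv hy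
    have hym : y ∈ m :=
      (List.mem_cons.mp hy).resolve_left (fun e => not_arc_of_arc hvy (e ▸ hxv))
    obtain ⟨k, hk, hch⟩ := exists_insert_of_isChain hm.2 hxv
      (fun hvm => hv (List.mem_cons_of_mem _ hvm)) ⟨y, hym, hvy⟩
    refine ⟨x, k, ⟨?_, hch⟩, ?_⟩
    · rw [((hk.cons x).trans (List.Perm.swap v x m)).nodup_iff]
      exact List.nodup_cons.mpr ⟨hv, hm.1⟩
    · have h1 := hp.length_eq
      have h2 := hk.length_eq
      simp only [List.length_cons] at h1 h2
      omega
  push Not at hmix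
  obtain ⟨x₀, b₀, hx₀, hb₀, hxb₀⟩ :=
    hT.exists_arc_leaving (S := fun v => v ∈ a :: l) List.mem_cons_self hw
  obtain ⟨b, c, ⟨hb, x, hx, hxb⟩, hc, hbc⟩ := hT.exists_arc_leaving
    (S := fun v => v ∉ a :: l ∧ ∃ x ∈ a :: l, T.arc x v) (b := a)
    ⟨hb₀, x₀, hx₀, hxb₀⟩ (fun h => h.1 List.mem_cons_self)
  have hcl : c ∉ a :: l := fun hcl => hmix b hb ⟨x, hx, hxb⟩ c hcl hbc
  have hdom : ∀ z ∈ a :: l, T.arc c z := fun z hz =>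
    arc_of_not_arc (fun e => hcl (e ▸ hz)) (fun hzc => hc ⟨hcl, z, hz, hzc⟩)
  obtain ⟨m, hm, hp⟩ := h.exists_rotate hx
  have hbm : b ∉ x :: m := by rwa [hp.mem_iff]
  have hcm : c ∉ x :: m := by rwa [hp.mem_iff]
  have hbc' : b ≠ c := fun e => T.irrefl c (e ▸ hbc)
  refine ⟨b, c :: (m ++ [x]), ⟨?_, ?_⟩, ?_⟩
  · have hq : (b :: c :: (m ++ [x])).Perm (b :: c :: x :: m) :=
      ((List.perm_append_singleton x m).cons c).cons b
    rw [hq.nodup_iff, List.nodup_cons, List.nodup_cons]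
    exact ⟨by simpa [hbc'] using hbm, hcm, hm.1⟩
  · have hcyc := hm.2
    have hch : List.IsChain T.arc (c :: (m ++ [x])) := by
      cases m with
      | nil => simpa using hdom x hx
      | cons y m =>
        have hy : T.arc c y := hdom y (hp.mem_iff.mp (by simp))
        rw [List.cons_append, List.isChain_cons_cons] at hcyc
        simpa using ⟨hy, hcyc.2⟩
    have := List.isChain_split (R := T.arc) (l₁ := b :: c :: m) (c := x) (l₂ := [b])
    simpa using this.mpr ⟨by simpa [hbc] using hch, by simpa using hxb⟩
  · have h1 := hp.length_eq
    simp only [List.length_cons, List.length_append, List.length_nil] at h1 ⊢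
    omega

lemma Strong.exists_isCyc (hT : T.Strong) (hc : 2 ≤ Fintype.card T.V) :
    ∃ a l, T.IsCyc a l := by
  have : Nonempty T.V := Fintype.card_pos_iff.mp (by omega)
  obtain ⟨x⟩ := this
  obtain ⟨y, hxy⟩ := hT.exists_arc_to hc x
  obtain ⟨p, q, hxp, hxq, hpq⟩ := hT.exists_arc_leaving (S := T.arc x) hxy (T.irrefl x)
  have hqx : q ≠ x := fun e => not_arc_of_arc hxp (e ▸ hpq)
  have hq : T.arc q x := arc_of_not_arc hqx.symm hxq
  have hpx : x ≠ p := fun e => T.irrefl p (e ▸ hxp)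
  have hpq' : p ≠ q := fun e => T.irrefl q (e ▸ hpq)
  exact ⟨x, [p, q], by simp [hpx, hqx.symm, hpq'], by simp [hxp, hpq, hq]⟩

lemma Strong.exists_isCyc_card (hT : T.Strong) (hc : 2 ≤ Fintype.card T.V) :
    ∃ a l, T.IsCyc a l ∧ (a :: l).length = Fintype.card T.V := by
  have key : ∀ k ≤ Fintype.card T.V, ∃ a l, T.IsCyc a l ∧ k ≤ (a :: l).length := by
    intro k
    induction k with
    | zero =>
      intro _
      obtain ⟨a, l, h⟩ := hT.exists_isCyc hc
      exact ⟨a, l, h, Nat.zero_le _⟩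
    | succ k ih =>
      intro hk
      obtain ⟨a, l, h, hl⟩ := ih (by omega)
      by_cases hall : ∀ w, w ∈ a :: l
      · refine ⟨a, l, h, hk.trans ?_⟩
        rw [← List.toFinset_card_of_nodup h.1, ← Finset.card_univ]
        exact Finset.card_le_card fun w _ => List.mem_toFinset.mpr (hall w)
      · push Not at hall
        obtain ⟨w, hw⟩ := hall
        obtain ⟨b, m, hm, hlt⟩ := h.exists_longer hT hw
        refine ⟨b, m, hm, ?_⟩
        simp only [List.length_cons] at hl ⊢
        omega
  obtain ⟨a, l, h, hl⟩ := key _ le_rfl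
  exact ⟨a, l, h, le_antisymm h.1.length_le_card hl⟩

lemma IsCyc.isHamiltonian {a : T.V} {l : List T.V} (h : T.IsCyc a l)
    (hl : (a :: l).length = Fintype.card T.V) : T.IsHamiltonian := by
  unfold IsHamiltonian
  rw [← hl]
  let f : Fin (l.length + 1) → T.V := (a :: l).get
  have hf : Function.Bijective f :=
    (Fintype.bijective_iff_injective_and_card f).mpr
      ⟨List.nodup_iff_injective_get.mp h.1, by simpa using hl⟩
  have harc : ∀ i : Fin (l.length + 1), T.arc (f i) (f (i + 1)) := by
    have hch : List.IsChain T.arc ((a :: l) ++ [a]) := h.2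
    rw [List.isChain_iff_getElem] at hch
    intro i
    induction i using Fin.lastCases with
    | last =>
      have := hch l.length (by simp)
      rw [List.getElem_append_left (by simp), List.getElem_append_right (by simp)] at this
      simp only [List.getElem_singleton] at this
      rw [Fin.last_add_one]
      exact this
    | cast i =>
      have := hch i (by simp)
      rw [List.getElem_append_left (by simp),
        List.getElem_append_left (by simp)] at this
      rw [Fin.coeSucc_eq_succ]
      exact this
  exact ⟨Equiv.ofBijective f hf, harc⟩

/-- Camion's theorem: a strong tournament of order at least two is Hamiltonian. -/
theorem Strong.isHamiltonian (hT : T.Strong) (hc : 2 ≤ Fintype.card T.V) :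
    T.IsHamiltonian := by
  obtain ⟨a, l, h, hl⟩ := hT.exists_isCyc_card hc
  exact h.isHamiltonian hl

theorem IsHamiltonian.strong (h : T.IsHamiltonian) : T.Strong := by
  obtain ⟨f, hf⟩ := h
  intro u v
  have : Nonempty T.V := ⟨u⟩
  have : NeZero (Fintype.card T.V) := ⟨Fintype.card_ne_zero⟩
  have key : ∀ (i : ZMod (Fintype.card T.V)) (k : ℕ),
      Relation.ReflTransGen T.arc (f i) (f (i + k)) := by
    intro i k
    induction k with
    | zero => simpa using Relation.ReflTransGen.refl
    | succ k ih =>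
      have := ih.tail (hf _)
      rwa [add_assoc, ← Nat.cast_succ] at this
  simpa using key (f.symm u) (f.symm v - f.symm u).val

lemma card_ILTT (T : Tournament) : Fintype.card T.ILTT.V = 2 * Fintype.card T.V := by
  rw [two_mul]
  exact Fintype.card_sum

lemma card_ILTTd (T : Tournament) : Fintype.card T.ILTTd.V = 2 * Fintype.card T.V := by
  rw [two_mul]
  exact Fintype.card_sum

lemma Strong.of_ILTT (h : T.ILTT.Strong) : T.Strong := by
  intro u v
  have proj : ∀ x y : T.ILTT.V, T.ILTT.arc x y →
      Relation.ReflTransGen T.arc (Sum.elim id id x) (Sum.elim id id y) := by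
    rintro (x | x) (y | y) hxy
    · exact .single hxy
    · exact .single hxy
    · rcases hxy with hxy | rfl
      · exact .single hxy
      · exact .refl
    · exact .single hxy
  exact Relation.ReflTransGen.lift' (Sum.elim id id) proj _ _ (h (Sum.inl u) (Sum.inl v))

lemma Strong.ILTT (h : T.Strong) (hc : 2 ≤ Fintype.card T.V) : T.ILTT.Strong := by
  have orig (x y : T.V) : Relation.ReflTransGen T.ILTT.arc (Sum.inl x) (Sum.inl y) :=
    Relation.ReflTransGen.lift (p := T.ILTT.arc) Sum.inl (fun _ _ hxy => hxy) _ _ (h x y)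
  have toOrig : ∀ u : T.ILTT.V, ∃ x : T.V, Relation.ReflTransGen T.ILTT.arc u (Sum.inl x) := by
    rintro (x | x)
    · exact ⟨x, .refl⟩
    · exact ⟨x, .single (Or.inr rfl)⟩
  have ofOrig : ∀ v : T.ILTT.V, ∃ x : T.V, Relation.ReflTransGen T.ILTT.arc (Sum.inl x) v := by
    rintro (x | x)
    · exact ⟨x, .refl⟩
    · obtain ⟨y, hy⟩ := h.exists_arc_from hc x
      exact ⟨y, .single hy⟩
  intro u v
  obtain ⟨x, hx⟩ := toOrig u
  obtain ⟨y, hy⟩ := ofOrig v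
  exact (hx.trans (orig x y)).trans hy

/-- If `T` has no sink, then its dual ILTT extension is strong. -/
lemma strong_ILTTd (h : ∀ x : T.V, ∃ y, T.arc x y) : T.ILTTd.Strong := by
  have down (x : T.V) : Relation.ReflTransGen T.ILTTd.arc (Sum.inr x) (Sum.inl x) :=
    .single (Or.inr rfl)
  have up (x : T.V) : Relation.ReflTransGen T.ILTTd.arc (Sum.inl x) (Sum.inr x) := by
    obtain ⟨y, hy⟩ := h x
    exact .head (b := Sum.inr y) hy (.single hy)
  have orig (x y : T.V) : Relation.ReflTransGen T.ILTTd.arc (Sum.inl x) (Sum.inl y) := by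
    by_cases hxy : T.arc x y
    · exact .single hxy
    by_cases e : x = y
    · exact e ▸ .refl
    · have hr : T.ILTTd.arc (Sum.inr x) (Sum.inr y) := arc_of_not_arc (T := T) e hxy
      exact ((up x).tail hr).trans (down y)
  rintro (x | x) (y | y)
  · exact orig x y
  · exact (orig x y).trans (up y)
  · exact (down x).trans (orig x y)
  · exact ((down x).trans (orig x y)).trans (up y)

lemma strong_iterate_ILTT_iff (hc : 2 ≤ Fintype.card T.V) (t : ℕ) :
    2 ≤ Fintype.card (Tournament.ILTT^[t] T).V ∧
      ((Tournament.ILTT^[t] T).Strong ↔ T.Strong) := by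
  induction t with
  | zero => exact ⟨hc, Iff.rfl⟩
  | succ t ih =>
    rw [Function.iterate_succ_apply', card_ILTT]
    exact ⟨by omega, Iff.trans ⟨Strong.of_ILTT, fun h => h.ILTT ih.1⟩ ih.2⟩

lemma strong_iterate_ILTTd (hc : 2 ≤ Fintype.card T.V) (h : ∀ x : T.V, ∃ y, T.arc x y)
    (t : ℕ) : 2 ≤ Fintype.card (Tournament.ILTTd^[t + 1] T).V ∧
      (Tournament.ILTTd^[t + 1] T).Strong := by
  induction t with
  | zero =>
    rw [Function.iterate_one, card_ILTTd]
    exact ⟨by omega, strong_ILTTd h⟩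
  | succ t ih =>
    rw [Function.iterate_succ_apply', card_ILTTd]
    exact ⟨by omega, strong_ILTTd (ih.2.exists_arc_to ih.1)⟩

end Tournament

/-- For a tournament `G` of order at least 3: (1) for every `t ≥ 1`,
`ILTT^t(G)` is Hamiltonian iff `G` is strong; (2) if `G` has no sink then
`ILTT_d^t(G)` is Hamiltonian for every `t ≥ 1`. -/
theorem stmt15 (G : Tournament) (hcard : 3 ≤ Fintype.card G.V) :
    (∀ t : ℕ, 1 ≤ t → ((Tournament.ILTT^[t] G).IsHamiltonian ↔ G.Strong)) ∧
    ((∀ x : G.V, ∃ y : G.V, G.arc x y) →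
      ∀ t : ℕ, 1 ≤ t → (Tournament.ILTTd^[t] G).IsHamiltonian) := by
  refine ⟨fun t _ => ?_, fun h t ht => ?_⟩
  · obtain ⟨hc, hiff⟩ := strong_iterate_ILTT_iff (T := G) (by omega) t
    exact Iff.trans ⟨IsHamiltonian.strong, fun h => h.isHamiltonian hc⟩ hiff
  · obtain ⟨t, rfl⟩ := Nat.exists_eq_add_of_le' ht
    obtain ⟨hc, hs⟩ := strong_iterate_ILTTd (T := G) (by omega) h t
    exact hs.isHamiltonian hc
end
end

section
/- Let A be the (complex) adjacency matrix of a tournament G on n nodes, and let B be the 2n × 2n block matrix B = [[A, A], [I + A, A]] (the adjacency matrix of ILTT(G), listing the original nodes first and then their clones). Then −1/2 is not an eigenvalue of B. -/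
/-- `A` is the adjacency matrix of a tournament: zero diagonal, and for distinct
`i, j` exactly one of `A i j`, `A j i` equals 1 and the other equals 0. -/
def IsTournamentAdjMatrix {n : ℕ} (A : Matrix (Fin n) (Fin n) ℂ) : Prop :=
  (∀ i, A i i = 0) ∧
    ∀ i j, i ≠ j → ((A i j = 1 ∧ A j i = 0) ∨ (A i j = 0 ∧ A j i = 1))

/-- `μ` is an eigenvalue of `M`: there is a nonzero vector `v` with `Mv = μv`. -/
def IsEigenvalue {m : Type} [Fintype m] (M : Matrix m m ℂ) (μ : ℂ) : Prop :=
  ∃ v : m → ℂ, v ≠ 0 ∧ M.mulVec v = μ • v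

/-- If `A` is the adjacency matrix of a tournament on `n` nodes and
`B = [[A, A], [I + A, A]]` is the adjacency matrix of `ILTT(G)`, then `-1/2` is
not an eigenvalue of `B`. -/
theorem stmt16 (n : ℕ) (A : Matrix (Fin n) (Fin n) ℂ)
    (hA : IsTournamentAdjMatrix A) :
    ¬ IsEigenvalue (Matrix.fromBlocks A A (1 + A) A) (-1 / 2 : ℂ) := by
  rintro ⟨v, hv, h⟩
  obtain ⟨x, y, rfl⟩ : ∃ x y, v = Sum.elim x y :=
    ⟨v ∘ Sum.inl, v ∘ Sum.inr, (Sum.elim_comp_inl_inr v).symm⟩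
  rw [Matrix.fromBlocks_mulVec] at h
  simp only [Sum.elim_comp_inl, Sum.elim_comp_inr, Matrix.add_mulVec, Matrix.one_mulVec] at h
  have hx : A.mulVec x + A.mulVec y = (-1 / 2 : ℂ) • x := funext fun i => congrFun h (Sum.inl i)
  have hy : x + A.mulVec x + A.mulVec y = (-1 / 2 : ℂ) • y :=
    funext fun i => congrFun h (Sum.inr i)
  have hyx : y = -x := by
    rw [add_assoc, hx] at hy
    ext i
    have hi := congrFun hy i
    simp only [Pi.add_apply, Pi.smul_apply, smul_eq_mul] at hi
    rw [Pi.neg_apply]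
    linear_combination 2 * hi
  subst hyx
  have hx0 : x = 0 := by simpa [Matrix.mulVec_neg] using hx.symm
  subst hx0
  exact hv (by ext (i | i) <;> simp)
end

section
/- Let A be the (complex) adjacency matrix of a tournament G on n nodes, and let B be the 2n × 2n block matrix B = [[A, A], [I + A, A]] (the adjacency matrix of ILTT(G)). Then for every nonzero complex number μ, μ is an eigenvalue of B if and only if there exists a nonzero eigenvalue λ of A such that μ² − 2λμ − λ = 0 (equivalently, μ = λ ± (λ² + λ)^{1/2}). -/
open Matrix in
/-- A vector `(x, y)` satisfies the eigenvector equation of `[[A, A], [1 + A, A]]` for `μ ≠ 0` iff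
`y` is the multiple `(1 + μ) / μ` of `x` and `(2μ + 1) A x = μ² x`. -/
theorem fromBlocks_mulVec_elim_eq_smul_iff {m K : Type*} [Fintype m] [DecidableEq m] [Field K]
    (A : Matrix m m K) {μ : K} (hμ : μ ≠ 0) (x y : m → K) :
    fromBlocks A A (1 + A) A *ᵥ Sum.elim x y = μ • Sum.elim x y ↔
      μ • y = (1 + μ) • x ∧ (2 * μ + 1) • A *ᵥ x = μ ^ 2 • x := by
  have hsmul : μ • Sum.elim x y = Sum.elim (μ • x) (μ • y) := by
    ext (i | i) <;> simp
  rw [fromBlocks_mulVec, hsmul, Sum.elim_eq_iff]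
  simp only [Sum.elim_comp_inl, Sum.elim_comp_inr, add_mulVec, one_mulVec]
  have hy : μ • y = (1 + μ) • x → μ • A *ᵥ y = (1 + μ) • A *ᵥ x := fun h => by
    rw [← mulVec_smul, h, mulVec_smul]
  constructor
  · rintro ⟨h₁, h₂⟩
    have h : μ • y = (1 + μ) • x := by
      rw [← h₂, add_assoc, h₁]
      module
    refine ⟨h, ?_⟩
    calc (2 * μ + 1) • A *ᵥ x = μ • A *ᵥ x + (1 + μ) • A *ᵥ x := by module
      _ = μ • (A *ᵥ x + A *ᵥ y) := by rw [← hy h, smul_add]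
      _ = μ ^ 2 • x := by rw [h₁, smul_smul, sq]
  · rintro ⟨h, hx⟩
    have h₁ : A *ᵥ x + A *ᵥ y = μ • x := by
      apply smul_right_injective _ hμ
      calc μ • (A *ᵥ x + A *ᵥ y) = (2 * μ + 1) • A *ᵥ x := by
            rw [smul_add, hy h]
            module
        _ = μ • μ • x := by rw [hx, smul_smul, sq]
    refine ⟨h₁, ?_⟩
    rw [add_assoc, h₁, h]
    module

/-- If `A` is the adjacency matrix of a tournament on `n` nodes and
`B = [[A, A], [I + A, A]]`, then a nonzero `μ` is an eigenvalue of `B` iff there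
is a nonzero eigenvalue `λ` of `A` with `μ² - 2λμ - λ = 0`. -/
theorem stmt17 (n : ℕ) (A : Matrix (Fin n) (Fin n) ℂ)
    (hA : IsTournamentAdjMatrix A) (μ : ℂ) (hμ : μ ≠ 0) :
    IsEigenvalue (Matrix.fromBlocks A A (1 + A) A) μ ↔
      ∃ lam : ℂ, lam ≠ 0 ∧ IsEigenvalue A lam ∧
        μ ^ 2 - 2 * lam * μ - lam = 0 := by
  constructor
  · rintro ⟨v, hv, hBv⟩
    obtain ⟨x, y, rfl⟩ : ∃ x y, v = Sum.elim x y := ⟨_, _, (Sum.elim_comp_inl_inr v).symm⟩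
    obtain ⟨hy, hx⟩ := (fromBlocks_mulVec_elim_eq_smul_iff A hμ x y).1 hBv
    have hx0 : x ≠ 0 := by
      rintro rfl
      have : y = 0 := by simpa [hμ] using hy
      exact hv (by simp [this])
    have hμ2 : 2 * μ + 1 ≠ 0 := by
      intro h
      rw [h, zero_smul] at hx
      exact smul_ne_zero (pow_ne_zero 2 hμ) hx0 hx.symm
    refine ⟨μ ^ 2 / (2 * μ + 1), div_ne_zero (pow_ne_zero 2 hμ) hμ2, ⟨x, hx0, ?_⟩, ?_⟩
    · rw [div_eq_inv_mul, mul_smul, ← hx, inv_smul_smul₀ hμ2]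
    · linear_combination -div_mul_cancel₀ (μ ^ 2) hμ2
  · rintro ⟨lam, -, ⟨x, hx0, hx⟩, h⟩
    refine ⟨Sum.elim x (((1 + μ) / μ) • x), ?_, ?_⟩
    · intro h0
      exact hx0 (funext fun i => congrFun h0 (Sum.inl i))
    · rw [fromBlocks_mulVec_elim_eq_smul_iff A hμ, hx, smul_smul, smul_smul, mul_div_cancel₀ _ hμ]
      exact ⟨rfl, by congr 1; linear_combination -h⟩
end
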